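/- For all integers r ≥ 2 and k ≥ 2, the set D_{r,k} is a numerical semigroup: it contains 0, it is closed under addition, and its complement in ℕ is finite. -/

import Mathlib

open SimpleGraph

/-- A `(v, b, r, k)`-combinatorial configuration: a bipartite simple graph on
`Fin v ⊕ Fin b` (left part `Fin v`, right part `Fin b`), connected (here:
preconnected, so that the empty graph counts as a configuration), where every
left vertex has degree `r`, every right vertex has degree `k`, and there is no
cycle of length `4`. -/
def IsConfiguration (v b r k : ℕ) (G : SimpleGraph (Fin v ⊕ Fin b)) : Prop :=
  (∀ i j : Fin v, ¬ G.Adj (Sum.inl i) (Sum.inl j)) ∧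
  (∀ i j : Fin b, ¬ G.Adj (Sum.inr i) (Sum.inr j)) ∧
  G.Preconnected ∧
  (∀ i : Fin v, (G.neighborSet (Sum.inl i)).ncard = r) ∧
  (∀ j : Fin b, (G.neighborSet (Sum.inr j)).ncard = k) ∧
  (∀ (x : Fin v ⊕ Fin b) (c : G.Walk x x), c.IsCycle → c.length ≠ 4)

/-- The tuple `(v, b, r, k)` is configurable if a `(v,b,r,k)`-combinatorial
configuration exists. -/
def Configurable (v b r k : ℕ) : Prop :=
  ∃ G : SimpleGraph (Fin v ⊕ Fin b), IsConfiguration v b r k G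

/-- `D r k` is the set of `d ∈ ℕ` such that
`(d·k/gcd(r,k), d·r/gcd(r,k), r, k)` is configurable. -/
def D (r k : ℕ) : Set ℕ :=
  {d | Configurable (d * k / Nat.gcd r k) (d * r / Nat.gcd r k) r k}

/-!
Connectedness can be ignored when `r, k ≥ 2`: if the incidence graph is disconnected, take an edge
`ab` that is not a bridge and an edge `a'b'` of another component, and replace them by `ab'` and
`a'b`. Degrees do not change, no 4-cycle appears, and the two components merge. Hence disjoint
unions give closure under addition. For cofiniteness, let `g = gcd(r, k)` and take `k / g` copies of
`ℤ/d` as points and `r / g` copies as blocks, each point copy being joined to each block copy by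
`g` translations. If the `g · (k / g) · (r / g)` translation amounts form a Sidon family, which
exists in `ℤ/d` for all large `d`, then there are no 4-cycles.
-/

section Graph

variable {V : Type*} {G H : SimpleGraph V}

lemma reachable_le_reachable_of_adj_le_reachable (h : G.Adj ≤ H.Reachable) :
    G.Reachable ≤ H.Reachable := by
  rintro u v ⟨p⟩
  induction p with
  | nil => exact .rfl
  | cons huw _ ih => exact (h _ _ huw).trans ih

lemma exists_isPath_length_eq_of_isAcyclic [Nonempty V] (hG : G.IsAcyclic)
    (hdeg : ∀ v, (G.neighborSet v).Nontrivial) (n : ℕ) :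
    ∃ (u v : V) (p : G.Walk u v), p.IsPath ∧ p.length = n := by
  induction n with
  | zero => exact ⟨Classical.arbitrary V, _, .nil, .nil, rfl⟩
  | succ n ih =>
    obtain ⟨u, v, p, hp, hlen⟩ := ih
    obtain ⟨w, hvw : G.Adj v w, hw⟩ := (hdeg v).exists_ne p.penultimate
    have hw_notMem : w ∉ p.support := fun hmem ↦ hw (hG.eq_penultimate_of_adj_end hp hvw hmem)
    exact ⟨u, w, p.concat hvw, hp.concat hw_notMem hvw, by rw [Walk.length_concat, hlen]⟩

lemma not_isAcyclic_of_nontrivial_neighborSet [Finite V] [Nonempty V]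
    (hdeg : ∀ v, (G.neighborSet v).Nontrivial) : ¬ G.IsAcyclic := by
  have := Fintype.ofFinite V
  intro hG
  obtain ⟨u, v, p, hp, hlen⟩ := exists_isPath_length_eq_of_isAcyclic hG hdeg (Fintype.card V)
  exact hp.length_lt.ne hlen

end Graph

section Incidence

variable {α β γ δ : Type*} {r k : ℕ} {I : α → β → Prop} {J : γ → δ → Prop}

/-- Every row of the incidence matrix of `I` has `r` ones: each point lies on `r` blocks.
Regularity of the blocks is expressed as `RowRegular k (flip I)`. -/
def RowRegular (r : ℕ) (I : α → β → Prop) : Prop :=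
  ∀ a, {b | I a b}.ncard = r

/-- Two distinct points lie on at most one common block, that is, the incidence graph has no
4-cycle. -/
def IsPartialLinear (I : α → β → Prop) : Prop :=
  ∀ ⦃a a' b b'⦄, I a b → I a b' → I a' b → I a' b' → a = a' ∨ b = b'

/-- A combinatorial configuration without the connectedness requirement, encoded as an incidence
relation between points `α` and blocks `β`. -/
structure IsPreconfiguration (r k : ℕ) (I : α → β → Prop) : Prop where
  pointRegular : RowRegular r I
  blockRegular : RowRegular k (flip I)
  partialLinear : IsPartialLinear I

lemma RowRegular.comp_equiv (hI : RowRegular r I) (e : γ ≃ α) (f : δ ≃ β) :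
    RowRegular r fun c d ↦ I (e c) (f d) := fun c ↦ by
  rw [← hI (e c), ← Set.ncard_image_of_injective _ f.injective, f.image_eq_preimage_symm]
  simp

lemma IsPreconfiguration.comp_equiv (hI : IsPreconfiguration r k I) (e : γ ≃ α) (f : δ ≃ β) :
    IsPreconfiguration r k fun c d ↦ I (e c) (f d) where
  pointRegular := hI.pointRegular.comp_equiv e f
  blockRegular := hI.blockRegular.comp_equiv f e
  partialLinear _ _ _ _ h₁ h₂ h₃ h₄ :=
    (hI.partialLinear h₁ h₂ h₃ h₄).imp (e.injective ·) (f.injective ·)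

lemma flip_liftRel : flip (Sum.LiftRel I J) = Sum.LiftRel (flip I) (flip J) := by
  ext (b | d) (a | c) <;> simp [flip]

lemma RowRegular.liftRel (hI : RowRegular r I) (hJ : RowRegular r J) :
    RowRegular r (Sum.LiftRel I J) := by
  rintro (a | c)
  · have hrow : {y | Sum.LiftRel I J (.inl a) y} = Sum.inl '' {b | I a b} := by
      ext (b | d) <;> simp
    rw [hrow, Set.ncard_image_of_injective _ Sum.inl_injective, hI a]
  · have hrow : {y | Sum.LiftRel I J (.inr c) y} = Sum.inr '' {d | J c d} := by
      ext (b | d) <;> simp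
    rw [hrow, Set.ncard_image_of_injective _ Sum.inr_injective, hJ c]

lemma IsPartialLinear.liftRel (hI : IsPartialLinear I) (hJ : IsPartialLinear J) :
    IsPartialLinear (Sum.LiftRel I J) := by
  rintro _ _ _ _ (⟨h₁⟩ | ⟨h₁⟩) (⟨h₂⟩ | ⟨h₂⟩) (⟨h₃⟩ | ⟨h₃⟩) (⟨h₄⟩ | ⟨h₄⟩)
  · exact (hI h₁ h₂ h₃ h₄).imp (congrArg _) (congrArg _)
  · exact (hJ h₁ h₂ h₃ h₄).imp (congrArg _) (congrArg _)

lemma IsPreconfiguration.liftRel (hI : IsPreconfiguration r k I) (hJ : IsPreconfiguration r k J) :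
    IsPreconfiguration r k (Sum.LiftRel I J) where
  pointRegular := hI.pointRegular.liftRel hJ.pointRegular
  blockRegular := flip_liftRel ▸ hI.blockRegular.liftRel hJ.blockRegular
  partialLinear := hI.partialLinear.liftRel hJ.partialLinear

end Incidence

section Switch

variable {α β : Type*} {r k : ℕ} {I : α → β → Prop} {a a' : α} {b b' : β}

/-- The incidence relation obtained from `I` by replacing the incidences `(a, b)` and `(a', b')`
with `(a, b')` and `(a', b)`. -/
def Switch (I : α → β → Prop) (a a' : α) (b b' : β) (x : α) (y : β) : Prop :=
  (x = a ∧ y = b') ∨ (x = a' ∧ y = b) ∨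
    (I x y ∧ ¬ (x = a ∧ y = b) ∧ ¬ (x = a' ∧ y = b'))

/-- The incidences `(a, b)` and `(a', b')` can be switched without creating a 4-cycle: no walk of
length three joins `a` to `b'` or `a'` to `b`. Such walks may backtrack, so in particular
`(a, b')` and `(a', b)` are not incident. -/
structure IsSwitchable (I : α → β → Prop) (a a' : α) (b b' : β) : Prop where
  incident : I a b
  incident' : I a' b'
  no_walk : ∀ ⦃x y⦄, I a y → I x y → ¬ I x b'
  no_walk' : ∀ ⦃x y⦄, I a' y → I x y → ¬ I x b

lemma flip_switch : flip (Switch I a a' b b') = Switch (flip I) b b' a a' := by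
  ext y x
  simp only [flip, Switch]
  tauto

namespace IsSwitchable

lemma not_incident (h : IsSwitchable I a a' b b') : ¬ I a b' :=
  fun hab' ↦ h.no_walk hab' hab' hab'

lemma not_incident' (h : IsSwitchable I a a' b b') : ¬ I a' b :=
  fun ha'b ↦ h.no_walk' ha'b ha'b ha'b

lemma point_ne (h : IsSwitchable I a a' b b') : a ≠ a' := by
  rintro rfl
  exact h.not_incident h.incident'

lemma block_ne (h : IsSwitchable I a a' b b') : b ≠ b' := by
  rintro rfl
  exact h.not_incident h.incident

protected lemma flip (h : IsSwitchable I a a' b b') : IsSwitchable (flip I) b b' a a' where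
  incident := h.incident
  incident' := h.incident'
  no_walk _ _ h₁ h₂ h₃ := h.no_walk' h₃ h₂ h₁
  no_walk' _ _ h₁ h₂ h₃ := h.no_walk h₃ h₂ h₁

lemma rowRegular (h : IsSwitchable I a a' b b') (hI : RowRegular r I) :
    RowRegular r (Switch I a a' b b') := by
  intro x
  have hne := h.point_ne
  rw [← hI x]
  obtain rfl | hxa := eq_or_ne x a
  · have hrow : {y | Switch I x a' b b' x y} = insert b' ({y | I x y} \ {b}) := by
      ext y
      simp [Switch, hne]
    rw [hrow, Set.ncard_exchange (s := {y | I x y}) h.not_incident h.incident]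
  obtain rfl | hxa' := eq_or_ne x a'
  · have hrow : {y | Switch I a x b b' x y} = insert b ({y | I x y} \ {b'}) := by
      ext y
      simp [Switch, hxa]
    rw [hrow, Set.ncard_exchange (s := {y | I x y}) h.not_incident' h.incident']
  · simp [Switch, hxa, hxa']

/-- The other three sides of a quadrilateral through a new incidence would be a forbidden walk. -/
lemma incident_of_quadrilateral (h : IsSwitchable I a a' b b') {x x' : α} {y y' : β}
    (hx : x ≠ x') (hy : y ≠ y') (h₁ : Switch I a a' b b' x y) (h₂ : Switch I a a' b b' x y')
    (h₃ : Switch I a a' b b' x' y) (h₄ : Switch I a a' b b' x' y') : I x y := by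
  have hne := h.point_ne
  have hne' := h.block_ne
  obtain ⟨rfl, rfl⟩ | ⟨rfl, rfl⟩ | ⟨hxy, -⟩ := h₁
  · have hwalk : I x y' ∧ I x' y' ∧ I x' y := by grind [Switch]
    exact absurd hwalk.2.2 (h.no_walk hwalk.1 hwalk.2.1)
  · have hwalk : I x y' ∧ I x' y' ∧ I x' y := by grind [Switch]
    exact absurd hwalk.2.2 (h.no_walk' hwalk.1 hwalk.2.1)
  · exact hxy

lemma isPartialLinear (h : IsSwitchable I a a' b b') (hI : IsPartialLinear I) :
    IsPartialLinear (Switch I a a' b b') := by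
  intro x x' y y' h₁ h₂ h₃ h₄
  by_contra! ⟨hx, hy⟩
  have hquad := hI (h.incident_of_quadrilateral hx hy h₁ h₂ h₃ h₄)
    (h.incident_of_quadrilateral hx hy.symm h₂ h₁ h₄ h₃)
    (h.incident_of_quadrilateral hx.symm hy h₃ h₄ h₁ h₂)
    (h.incident_of_quadrilateral hx.symm hy.symm h₄ h₃ h₂ h₁)
  exact hquad.elim hx hy

lemma isPreconfiguration (h : IsSwitchable I a a' b b') (hI : IsPreconfiguration r k I) :
    IsPreconfiguration r k (Switch I a a' b b') where
  pointRegular := h.rowRegular hI.pointRegular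
  blockRegular := flip_switch ▸ h.flip.rowRegular hI.blockRegular
  partialLinear := h.isPartialLinear hI.partialLinear

end IsSwitchable

end Switch

section IncidenceGraph

variable {α β : Type*} {r k : ℕ} {I : α → β → Prop} {a a' : α} {b b' : β}

/-- The incidence graph (Levi graph) of an incidence relation. -/
def incidenceGraph (I : α → β → Prop) : SimpleGraph (α ⊕ β) where
  Adj
    | .inl a, .inr b => I a b
    | .inr b, .inl a => I a b
    | _, _ => False
  symm := ⟨by rintro (_ | _) (_ | _) h <;> exact h⟩
  loopless := ⟨by rintro (_ | _) h <;> exact h⟩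

@[simp] lemma incidenceGraph_adj_inl_inr : (incidenceGraph I).Adj (.inl a) (.inr b) ↔ I a b := .rfl

@[simp] lemma incidenceGraph_adj_inr_inl : (incidenceGraph I).Adj (.inr b) (.inl a) ↔ I a b := .rfl

@[simp] lemma not_incidenceGraph_adj_inl_inl : ¬ (incidenceGraph I).Adj (.inl a) (.inl a') := id

@[simp] lemma not_incidenceGraph_adj_inr_inr : ¬ (incidenceGraph I).Adj (.inr b) (.inr b') := id

lemma ncard_neighborSet_incidenceGraph_inl (a : α) :
    ((incidenceGraph I).neighborSet (.inl a)).ncard = {b | I a b}.ncard := by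
  rw [← Set.ncard_image_of_injective {b | I a b} (Sum.inr_injective (α := α))]
  congr 1
  ext (x | y) <;> simp

lemma ncard_neighborSet_incidenceGraph_inr (b : β) :
    ((incidenceGraph I).neighborSet (.inr b)).ncard = {a | I a b}.ncard := by
  rw [← Set.ncard_image_of_injective {a | I a b} (Sum.inl_injective (β := β))]
  congr 1
  ext (x | y) <;> simp

lemma isPartialLinear_iff_forall_isCycle_length_ne_four :
    IsPartialLinear I ↔
      ∀ (x : α ⊕ β) (c : (incidenceGraph I).Walk x x), c.IsCycle → c.length ≠ 4 := by
  constructor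
  · intro hI x c hc hlen
    match c, hc, hlen with
    | .cons (v := y) hxy (.cons (v := z) hyz (.cons (v := w) hzw (.cons hwx .nil))), hc, _ =>
      have hnodup : y ≠ w ∧ x ≠ z := by
        have := hc.support_nodup
        simp_all [eq_comm]
      obtain x | x := x <;> obtain y | y := y <;> obtain z | z := z <;> obtain w | w := w <;>
        first
        | exact hxy.elim | exact hyz.elim | exact hzw.elim | exact hwx.elim
        | skip
      · exact (hI hxy hwx hyz hzw).elim (by grind) (by grind)
      · exact (hI hxy hyz hwx hzw).elim (by grind) (by grind)
  · intro hcycle a a' b b' h₁ h₂ h₃ h₄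
    by_contra! ⟨ha, hb⟩
    let c : (incidenceGraph I).Walk (.inl a) (.inl a) :=
      .cons (incidenceGraph_adj_inl_inr.2 h₁) <| .cons (incidenceGraph_adj_inr_inl.2 h₃) <|
        .cons (incidenceGraph_adj_inl_inr.2 h₄) <| .cons (incidenceGraph_adj_inr_inl.2 h₂) .nil
    have hc : c.IsCycle := by
      rw [Walk.isCycle_def, Walk.isTrail_def]
      simp [c, ha, hb, ha.symm]
    exact hcycle _ c hc rfl

lemma deleteEdges_incidenceGraph_le_switch :
    (incidenceGraph I).deleteEdges {s(.inl a, .inr b), s(.inl a', .inr b')} ≤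
      incidenceGraph (Switch I a a' b b') := by
  rintro (x | y) (x' | y') ⟨hadj, hdel⟩
  · exact hadj
  · exact .inr <| .inr ⟨hadj, by simpa using hdel⟩
  · exact .inr <| .inr ⟨hadj, by simpa [imp_not_comm] using hdel⟩
  · exact hadj

/-- The detour around the edge `ab` stays in the component of `a`, hence avoids `a'b'`. -/
lemma reachable_switch_of_not_isBridge
    (hbridge : ¬ (incidenceGraph I).IsBridge s(.inl a, .inr b))
    (hdisc : ¬ (incidenceGraph I).Reachable (.inl a) (.inl a')) :
    (incidenceGraph (Switch I a a' b b')).Reachable (.inl a) (.inr b) := by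
  classical
  simp only [isBridge_iff_forall_walk_mem_edges, not_forall] at hbridge
  obtain ⟨p, hp⟩ := hbridge
  have hp' : s(.inl a', .inr b') ∉ p.edges := fun hmem ↦
    hdisc (p.takeUntil _ (p.fst_mem_support_of_mem_edges hmem)).reachable
  have hp_avoids : ∀ e ∈ p.edges, e ∉ ({s(.inl a, .inr b), s(.inl a', .inr b')} : Set _) := by
    rintro e he (rfl | rfl)
    exacts [hp he, hp' he]
  exact (p.toDeleteEdges _ hp_avoids).reachable.mono deleteEdges_incidenceGraph_le_switch

lemma reachable_le_reachable_switch
    (hab : (incidenceGraph (Switch I a a' b b')).Reachable (.inl a) (.inr b)) :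
    (incidenceGraph I).Reachable ≤ (incidenceGraph (Switch I a a' b b')).Reachable := by
  have hab' : (incidenceGraph (Switch I a a' b b')).Reachable (.inl a) (.inr b') :=
    Adj.reachable (.inl ⟨rfl, rfl⟩)
  have ha'b : (incidenceGraph (Switch I a a' b b')).Reachable (.inl a') (.inr b) :=
    Adj.reachable (.inr <| .inl ⟨rfl, rfl⟩)
  have hedge : ∀ x y, I x y →
      (incidenceGraph (Switch I a a' b b')).Reachable (.inl x) (.inr y) := by
    intro x y hxy
    by_cases h : x = a ∧ y = b
    · rwa [h.1, h.2]
    by_cases h' : x = a' ∧ y = b'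
    · rw [h'.1, h'.2]
      exact ha'b.trans <| hab.symm.trans hab'
    · exact Adj.reachable (.inr <| .inr ⟨hxy, h, h'⟩)
  refine reachable_le_reachable_of_adj_le_reachable ?_
  rintro (x | y) (x' | y') h
  exacts [h.elim, hedge _ _ h, (hedge _ _ h).symm, h.elim]

lemma reachable_lt_reachable_switch
    (hbridge : ¬ (incidenceGraph I).IsBridge s(.inl a, .inr b))
    (hdisc : ¬ (incidenceGraph I).Reachable (.inl a) (.inl a')) :
    (incidenceGraph I).Reachable < (incidenceGraph (Switch I a a' b b')).Reachable := by
  have hab := reachable_switch_of_not_isBridge (b' := b') hbridge hdisc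
  have ha'b : (incidenceGraph (Switch I a a' b b')).Reachable (.inl a') (.inr b) :=
    Adj.reachable (.inr <| .inl ⟨rfl, rfl⟩)
  exact lt_of_le_not_ge (reachable_le_reachable_switch hab) fun hge ↦
    hdisc (hge _ _ (hab.trans ha'b.symm))

lemma isSwitchable_of_not_reachable (hab : I a b) (ha'b' : I a' b')
    (hdisc : ¬ (incidenceGraph I).Reachable (.inl a) (.inl a')) : IsSwitchable I a a' b b' := by
  have hadj {x : α} {y : β} (hxy : I x y) : (incidenceGraph I).Reachable (.inl x) (.inr y) :=
    Adj.reachable hxy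
  refine ⟨hab, ha'b', fun x y h₁ h₂ h₃ ↦ hdisc ?_, fun x y h₁ h₂ h₃ ↦ hdisc ?_⟩
  · exact (hadj h₁).trans <| (hadj h₂).symm.trans <| (hadj h₃).trans (hadj ha'b').symm
  · exact (hadj hab).trans <| (hadj h₃).symm.trans <| (hadj h₂).trans (hadj h₁).symm

lemma nontrivial_neighborSet_incidenceGraph (hr : 2 ≤ r) (hk : 2 ≤ k) (hrow : RowRegular r I)
    (hcol : RowRegular k (flip I)) (v : α ⊕ β) :
    ((incidenceGraph I).neighborSet v).Nontrivial := by
  refine (Set.one_lt_ncard_iff_nontrivial_and_finite.1 ?_).1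
  obtain a | b := v
  · rwa [ncard_neighborSet_incidenceGraph_inl, hrow]
  · rw [ncard_neighborSet_incidenceGraph_inr]
    exact hk.trans_eq (hcol b).symm

lemma exists_incident_not_isBridge [Finite α] [Finite β] [Nonempty α] (hr : 2 ≤ r) (hk : 2 ≤ k)
    (hrow : RowRegular r I) (hcol : RowRegular k (flip I)) :
    ∃ a b, I a b ∧ ¬ (incidenceGraph I).IsBridge s(.inl a, .inr b) := by
  have hcyclic : ¬ (incidenceGraph I).IsAcyclic :=
    not_isAcyclic_of_nontrivial_neighborSet (nontrivial_neighborSet_incidenceGraph hr hk hrow hcol)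
  rw [isAcyclic_iff_forall_adj_isBridge] at hcyclic
  push Not at hcyclic
  obtain ⟨a | b, a' | b', hadj, hbridge⟩ := hcyclic
  · exact hadj.elim
  · exact ⟨a, b', hadj, hbridge⟩
  · exact ⟨a', b, hadj, Sym2.eq_swap ▸ hbridge⟩
  · exact hadj.elim

lemma exists_incident_not_reachable (hr : r ≠ 0) (hk : k ≠ 0) (hrow : RowRegular r I)
    (hcol : RowRegular k (flip I)) (hI : ¬ (incidenceGraph I).Preconnected) (a : α) :
    ∃ a' b', I a' b' ∧ ¬ (incidenceGraph I).Reachable (.inl a) (.inl a') := by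
  contrapose! hI
  have hpoint (x : α) : (incidenceGraph I).Reachable (.inl a) (.inl x) := by
    obtain ⟨y, hxy⟩ := Set.nonempty_of_ncard_ne_zero ((hrow x).trans_ne hr)
    exact hI x y hxy
  have hblock (y : β) : (incidenceGraph I).Reachable (.inl a) (.inr y) := by
    obtain ⟨x, hxy : I x y⟩ := Set.nonempty_of_ncard_ne_zero ((hcol y).trans_ne hk)
    exact (hpoint x).trans (incidenceGraph_adj_inl_inr.2 hxy).reachable
  have hall : ∀ v, (incidenceGraph I).Reachable (.inl a) v := Sum.rec hpoint hblock
  exact fun u v ↦ (hall u).symm.trans (hall v)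

lemma preconnected_incidenceGraph_of_isEmpty [IsEmpty α] (hk : k ≠ 0)
    (hcol : RowRegular k (flip I)) : (incidenceGraph I).Preconnected := by
  rintro (a | b)
  · exact isEmptyElim a
  · obtain ⟨a, -⟩ := Set.nonempty_of_ncard_ne_zero ((hcol b).trans_ne hk)
    exact isEmptyElim a

/-- Among the finitely many preconfigurations, one with maximal reachability relation is connected,
as otherwise a switch would enlarge that relation. -/
lemma IsPreconfiguration.exists_preconnected [Finite α] [Finite β] (hr : 2 ≤ r) (hk : 2 ≤ k)
    (hI : IsPreconfiguration r k I) :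
    ∃ J : α → β → Prop, IsPreconfiguration r k J ∧ (incidenceGraph J).Preconnected := by
  obtain ⟨J, hJ⟩ := exists_maximalFor_of_wellFoundedGT (IsPreconfiguration r k)
    (fun I : α → β → Prop ↦ (incidenceGraph I).Reachable) ⟨I, hI⟩
  have ⟨hrow, hcol, _⟩ := hJ.prop
  refine ⟨J, hJ.prop, ?_⟩
  cases isEmpty_or_nonempty α
  · exact preconnected_incidenceGraph_of_isEmpty (by lia) hcol
  by_contra hdisc
  obtain ⟨a, b, hab, hbridge⟩ := exists_incident_not_isBridge hr hk hrow hcol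
  obtain ⟨a', b', ha'b', haa'⟩ :=
    exists_incident_not_reachable (by lia) (by lia) hrow hcol hdisc a
  have hswitch := (isSwitchable_of_not_reachable hab ha'b' haa').isPreconfiguration hJ.prop
  exact hJ.not_gt hswitch (reachable_lt_reachable_switch hbridge haa')

end IncidenceGraph

section Configurable

variable {v b v' b' r k : ℕ}

lemma isConfiguration_incidenceGraph_iff {I : Fin v → Fin b → Prop} :
    IsConfiguration v b r k (incidenceGraph I) ↔
      IsPreconfiguration r k I ∧ (incidenceGraph I).Preconnected := by
  simp only [IsConfiguration, ncard_neighborSet_incidenceGraph_inl,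
    ncard_neighborSet_incidenceGraph_inr, ← isPartialLinear_iff_forall_isCycle_length_ne_four]
  constructor
  · rintro ⟨-, -, hconn, hrow, hcol, hlin⟩
    exact ⟨⟨hrow, hcol, hlin⟩, hconn⟩
  · rintro ⟨⟨hrow, hcol, hlin⟩, hconn⟩
    exact ⟨fun _ _ ↦ id, fun _ _ ↦ id, hconn, hrow, hcol, hlin⟩

lemma IsConfiguration.eq_incidenceGraph {G : SimpleGraph (Fin v ⊕ Fin b)}
    (hG : IsConfiguration v b r k G) :
    G = incidenceGraph fun i j ↦ G.Adj (.inl i) (.inr j) := by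
  ext (i | j) (i' | j')
  · simp [hG.1 i i']
  · simp
  · simp [G.adj_comm (.inr j)]
  · simp [hG.2.1 j j']

lemma IsPreconfiguration.configurable {α β : Type*} [Finite α] [Finite β] {I : α → β → Prop}
    (hr : 2 ≤ r) (hk : 2 ≤ k) (hI : IsPreconfiguration r k I) :
    Configurable (Nat.card α) (Nat.card β) r k := by
  obtain ⟨J, hJ, hconn⟩ :=
    (hI.comp_equiv (Finite.equivFin α).symm (Finite.equivFin β).symm).exists_preconnected hr hk
  exact ⟨incidenceGraph J, isConfiguration_incidenceGraph_iff.2 ⟨hJ, hconn⟩⟩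

lemma Configurable.exists_isPreconfiguration (h : Configurable v b r k) :
    ∃ I : Fin v → Fin b → Prop, IsPreconfiguration r k I := by
  obtain ⟨G, hG⟩ := h
  rw [hG.eq_incidenceGraph, isConfiguration_incidenceGraph_iff] at hG
  exact ⟨_, hG.1⟩

lemma configurable_zero : Configurable 0 0 r k :=
  ⟨incidenceGraph finZeroElim, isConfiguration_incidenceGraph_iff.2
    ⟨⟨finZeroElim, finZeroElim, finZeroElim⟩, Sum.rec finZeroElim finZeroElim⟩⟩

lemma Configurable.add (hr : 2 ≤ r) (hk : 2 ≤ k) (h : Configurable v b r k)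
    (h' : Configurable v' b' r k) : Configurable (v + v') (b + b') r k := by
  obtain ⟨I, hI⟩ := h.exists_isPreconfiguration
  obtain ⟨J, hJ⟩ := h'.exists_isPreconfiguration
  simpa only [Nat.card_sum, Nat.card_fin] using (hI.liftRel hJ).configurable hr hk

end Configurable

section Sidon

/-- A Sidon family: the sums of two of its terms, taken up to order, are pairwise distinct. -/
def IsSidon {ι M : Type*} [Add M] (f : ι → M) : Prop :=
  ∀ ⦃p q p' q'⦄, f p + f q = f p' + f q' → s(p, q) = s(p', q')

lemma isSidon_two_pow : IsSidon fun n : ℕ ↦ 2 ^ n := by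
  -- The larger exponent is recovered from the sum as its binary logarithm.
  have hlt {a b c d : ℕ} (hab : a ≤ b) (h : 2 ^ a + 2 ^ b = 2 ^ c + 2 ^ d) (hcd : c ≤ d) :
      b ≤ d := by
    have : 2 ^ b < 2 ^ (d + 1) := calc
      2 ^ b < 2 ^ a + 2 ^ b := Nat.lt_add_of_pos_left (by positivity)
      _ = 2 ^ c + 2 ^ d := h
      _ ≤ 2 ^ d + 2 ^ d := by gcongr; norm_num
      _ = 2 ^ (d + 1) := by ring
    exact Nat.lt_succ_iff.1 ((Nat.pow_lt_pow_iff_right (by norm_num)).1 this)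
  intro a b c d h
  simp only at h
  wlog hab : a ≤ b generalizing a b
  · rw [Sym2.eq_swap, this (by rwa [add_comm]) (by lia)]
  wlog hcd : c ≤ d generalizing c d
  · rw [this (by rwa [add_comm (2 ^ d)]) (by lia), Sym2.eq_swap]
  obtain rfl : b = d := (hlt hab h hcd).antisymm (hlt hcd h.symm hab)
  obtain rfl : a = c := Nat.pow_right_injective le_rfl (Nat.add_right_cancel h)
  rfl

lemma IsSidon.comp_injective {ι ι' M : Type*} [Add M] {f : ι → M} (hf : IsSidon f) {e : ι' → ι}
    (he : Function.Injective e) : IsSidon (f ∘ e) := fun _ _ _ _ h ↦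
  Sym2.map.injective he (hf h)

lemma IsSidon.injective {ι M : Type*} [Add M] {f : ι → M} (hf : IsSidon f) :
    Function.Injective f := fun p q h ↦ by
  simpa using hf (show f p + f p = f q + f q by rw [h])

lemma IsSidon.natCast_zmod {ι : Type*} {f : ι → ℕ} (hf : IsSidon f) {d : ℕ}
    (hd : ∀ i, 2 * f i < d) : IsSidon fun i ↦ (f i : ZMod d) := by
  intro p q p' q' h
  have hmod : f p + f q ≡ f p' + f q' [MOD d] := by
    rw [← ZMod.natCast_eq_natCast_iff]
    simpa only [Nat.cast_add] using h
  exact hf <| hmod.eq_of_lt_of_lt (by linarith [hd p, hd q]) (by linarith [hd p', hd q'])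

lemma exists_forall_isSidon_zmod (ι : Type*) [Finite ι] :
    ∃ N, ∀ d, N ≤ d → ∃ f : ι → ZMod d, IsSidon f := by
  let f (i : ι) : ℕ := 2 ^ (Finite.equivFin ι i : ℕ)
  have hf : IsSidon f := isSidon_two_pow.comp_injective (Fin.val_injective.comp (Equiv.injective _))
  refine ⟨2 * 2 ^ Nat.card ι, fun d hd ↦ ⟨_, hf.natCast_zmod fun i ↦ hd.trans_lt' ?_⟩⟩
  simp only [f]
  gcongr
  exacts [one_lt_two, Fin.is_lt _]

end Sidon

section TranslationIncidence

variable {G ι κ τ : Type*} [AddCommGroup G] {f : ι × κ × τ → G}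

/-- The incidence relation whose points are `ι`-indexed copies of a group `G` and whose blocks are
`κ`-indexed copies, the `i`-th copy of the points being joined to the `j`-th copy of the blocks by
the translations by `f (i, j, t)` for `t : τ`. -/
def TranslationIncidence (f : ι × κ × τ → G) (p : G × ι) (q : G × κ) : Prop :=
  ∃ t, q.1 = p.1 + f (p.2, q.2, t)

lemma flip_translationIncidence :
    flip (TranslationIncidence f) =
      TranslationIncidence fun e : κ × ι × τ ↦ -f (e.2.1, e.1, e.2.2) := by
  ext q p
  simp only [flip, TranslationIncidence, ← sub_eq_add_neg, eq_sub_iff_add_eq, eq_comm]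

lemma rowRegular_translationIncidence (hf : Function.Injective f) :
    RowRegular (Nat.card κ * Nat.card τ) (TranslationIncidence f) := by
  rintro ⟨x, i⟩
  let block (e : κ × τ) : G × κ := (x + f (i, e), e.1)
  have hrow : {q | TranslationIncidence f (x, i) q} = Set.range block := by
    ext ⟨y, j⟩
    simp [TranslationIncidence, block, eq_comm]
  have hblock : Function.Injective block := fun e e' h ↦ by
    simpa using hf (add_left_cancel (congrArg Prod.fst h))
  rw [hrow, ← Nat.card_coe_set_eq, Nat.card_range_of_injective hblock, Nat.card_prod]

/-- The four translations along the sides of a quadrilateral satisfy `f e₁ + f e₄ = f e₂ + f e₃`, so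
the Sidon property makes two adjacent sides the same translation. -/
lemma IsSidon.isPartialLinear_translationIncidence (hf : IsSidon f) :
    IsPartialLinear (TranslationIncidence f) := by
  rintro ⟨x, i⟩ ⟨x', i'⟩ ⟨y, j⟩ ⟨y', j'⟩ ⟨t₁, h₁⟩ ⟨t₂, h₂⟩ ⟨t₃, h₃⟩ ⟨t₄, h₄⟩
  dsimp only at h₁ h₂ h₃ h₄
  have hsum : f (i, j, t₁) + f (i', j', t₄) = f (i, j', t₂) + f (i', j, t₃) := by
    have hcancel : (x + f (i, j, t₁)) + (x' + f (i', j', t₄)) =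
        (x + f (i, j', t₂)) + (x' + f (i', j, t₃)) := by
      rw [← h₁, ← h₂, ← h₃, ← h₄, add_comm]
    simpa only [add_add_add_comm x, add_right_inj] using hcancel
  obtain ⟨heq, -⟩ | ⟨heq, -⟩ := Sym2.eq_iff.1 (hf hsum)
  · obtain ⟨-, rfl, rfl⟩ : i = i ∧ j = j' ∧ t₁ = t₂ := by simpa using heq
    exact .inr (by rw [h₁, h₂])
  · obtain ⟨rfl, -, rfl⟩ : i = i' ∧ j = j ∧ t₁ = t₃ := by simpa using heq
    exact .inl (by rw [add_right_cancel (h₁.symm.trans h₃)])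

lemma IsSidon.isPreconfiguration_translationIncidence (hf : IsSidon f) :
    IsPreconfiguration (Nat.card κ * Nat.card τ) (Nat.card ι * Nat.card τ)
      (TranslationIncidence f) where
  pointRegular := rowRegular_translationIncidence hf.injective
  blockRegular := by
    rw [flip_translationIncidence]
    exact rowRegular_translationIncidence fun e e' h ↦ by
      simpa [Prod.ext_iff, and_left_comm] using hf.injective (neg_injective h)
  partialLinear := hf.isPartialLinear_translationIncidence

end TranslationIncidence

lemma exists_forall_configurable {m n g : ℕ} (hng : 2 ≤ n * g) (hmg : 2 ≤ m * g) :
    ∃ N, ∀ d, N ≤ d → Configurable (d * m) (d * n) (n * g) (m * g) := by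
  obtain ⟨N, hN⟩ := exists_forall_isSidon_zmod (Fin m × Fin n × Fin g)
  refine ⟨N, fun d hd ↦ ?_⟩
  obtain rfl | _ := eq_zero_or_neZero d
  · simpa only [zero_mul] using configurable_zero
  obtain ⟨f, hf⟩ := hN d hd
  have hpre : IsPreconfiguration (n * g) (m * g) (TranslationIncidence f) := by
    simpa only [Nat.card_fin] using hf.isPreconfiguration_translationIncidence
  simpa only [Nat.card_prod, Nat.card_zmod, Nat.card_fin] using hpre.configurable hng hmg

lemma mem_D_iff {r k d : ℕ} :
    d ∈ D r k ↔ Configurable (d * (k / r.gcd k)) (d * (r / r.gcd k)) r k := by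
  rw [D, Set.mem_ofPred_eq, Nat.mul_div_assoc _ (Nat.gcd_dvd_right r k),
    Nat.mul_div_assoc _ (Nat.gcd_dvd_left r k)]

lemma exists_forall_mem_D {r k : ℕ} (hr : 2 ≤ r) (hk : 2 ≤ k) : ∃ N, ∀ d, N ≤ d → d ∈ D r k := by
  have hr_eq : r / r.gcd k * r.gcd k = r := Nat.div_mul_cancel (Nat.gcd_dvd_left r k)
  have hk_eq : k / r.gcd k * r.gcd k = k := Nat.div_mul_cancel (Nat.gcd_dvd_right r k)
  have hconf := exists_forall_configurable (hr.trans_eq hr_eq.symm) (hk.trans_eq hk_eq.symm)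
  simpa only [mem_D_iff, hr_eq, hk_eq] using hconf

/-- For `r ≥ 2` and `k ≥ 2`, the set `D r k` is a numerical semigroup:
it contains `0`, is closed under addition, and has finite complement in `ℕ`. -/
theorem D_is_numerical_semigroup (r k : ℕ) (hr : 2 ≤ r) (hk : 2 ≤ k) :
    0 ∈ D r k ∧ (∀ d d' : ℕ, d ∈ D r k → d' ∈ D r k → d + d' ∈ D r k) ∧
      (D r k)ᶜ.Finite := by
  refine ⟨?_, fun d d' hd hd' ↦ ?_, ?_⟩
  · simpa only [mem_D_iff, zero_mul] using configurable_zero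
  · rw [mem_D_iff] at hd hd' ⊢
    simpa only [add_mul] using hd.add hr hk hd'
  · obtain ⟨N, hN⟩ := exists_forall_mem_D hr hk
    exact (Set.finite_lt_nat N).subset fun d hd ↦ not_le.1 fun hNd ↦ hd (hN d hNd)
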